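/- arXiv:2110.11032 — 2 statements merged into one kernel-verified Lean document; each statement's English description precedes it below -/
import Mathlib

section
/- Let m ≥ 1, let U = R + iS be an m×m unitary matrix with R, S real m×m matrices, let Λ = diag(λ₁,…,λ_m) be a real diagonal m×m matrix, and suppose B = U Λ Uᵗ (so B is complex symmetric). Write B = B⁽¹⁾ + i B⁽²⁾ with B⁽¹⁾, B⁽²⁾ real, and define the 2m×2m real matrices K = [[B⁽¹⁾, B⁽²⁾],[B⁽²⁾, −B⁽¹⁾]], T = [[R, S],[S, −R]] and Λ̃ = [[Λ, 0],[0, −Λ]]. Then T is an orthogonal matrix and K = T Λ̃ Tᵗ; in particular the eigenvalues of K are exactly λ₁,…,λ_m together with −λ₁,…,−λ_m. -/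
open Matrix Polynomial

/-!
Identify `ℂⁿ` with `ℝⁿ ⊕ ℝⁿ` through real and imaginary parts. Then
`[[Re A, Im A], [Im A, -Re A]]` is the real matrix of the conjugate-linear map `z ↦ A z̄`, so `K`,
`T`, `Tᵗ` and `Λ̃` are the matrices of `z ↦ B z̄`, `z ↦ U z̄`, `z ↦ Uᵗ z̄` and `z ↦ Λ z̄`. Composing
these maps, `T Tᵗ` represents `z ↦ U U* z = z`, and `T Λ̃ Tᵗ` represents `z ↦ U Λ̄ Uᵗ z̄ = B z̄`
because `Λ` is real.
-/

section Realification

variable {l m n : Type*}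

/-- The real matrix of the linear map `z ↦ A z`, where `x + i y` has coordinates `(x, y)`. -/
def realification (A : Matrix m n ℂ) : Matrix (m ⊕ m) (n ⊕ n) ℝ :=
  fromBlocks (A.map Complex.re) (-A.map Complex.im) (A.map Complex.im) (A.map Complex.re)

/-- The real matrix of the conjugate-linear map `z ↦ A z̄`, where `x + i y` has coordinates
`(x, y)`. -/
def conjRealification (A : Matrix m n ℂ) : Matrix (m ⊕ m) (n ⊕ n) ℝ :=
  fromBlocks (A.map Complex.re) (A.map Complex.im) (A.map Complex.im) (-A.map Complex.re)

theorem map_re_mul [Fintype m] (A : Matrix l m ℂ) (B : Matrix m n ℂ) :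
    (A * B).map Complex.re =
      A.map Complex.re * B.map Complex.re - A.map Complex.im * B.map Complex.im := by
  ext i j
  simp [mul_apply]

theorem map_im_mul [Fintype m] (A : Matrix l m ℂ) (B : Matrix m n ℂ) :
    (A * B).map Complex.im =
      A.map Complex.re * B.map Complex.im + A.map Complex.im * B.map Complex.re := by
  ext i j
  simp [mul_apply, Finset.sum_add_distrib]

theorem map_re_map_star (A : Matrix m n ℂ) : (A.map star).map Complex.re = A.map Complex.re := by
  ext i j
  simp

theorem map_im_map_star (A : Matrix m n ℂ) : (A.map star).map Complex.im = -A.map Complex.im := by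
  ext i j
  simp

theorem realification_one [DecidableEq n] : realification (1 : Matrix n n ℂ) = 1 := by
  have re_one : (1 : Matrix n n ℂ).map Complex.re = 1 :=
    Matrix.map_one _ Complex.zero_re Complex.one_re
  have im_one : (1 : Matrix n n ℂ).map Complex.im = 0 := by
    ext i j
    simp [one_apply, apply_ite Complex.im]
  rw [realification, re_one, im_one, neg_zero, fromBlocks_one]

theorem conjRealification_transpose (A : Matrix m n ℂ) :
    conjRealification Aᵀ = (conjRealification A)ᵀ := by
  simp only [conjRealification, fromBlocks_transpose, transpose_map, transpose_neg]

theorem realification_mul_conjRealification [Fintype m] (A : Matrix l m ℂ) (B : Matrix m n ℂ) :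
    realification A * conjRealification B = conjRealification (A * B) := by
  simp only [realification, conjRealification, fromBlocks_multiply, map_re_mul, map_im_mul,
    Matrix.neg_mul, Matrix.mul_neg]
  congr 1 <;> abel

theorem conjRealification_mul_conjRealification [Fintype m]
    (A : Matrix l m ℂ) (B : Matrix m n ℂ) :
    conjRealification A * conjRealification B = realification (A * B.map star) := by
  simp only [realification, conjRealification, fromBlocks_multiply, map_re_mul, map_im_mul,
    map_re_map_star, map_im_map_star, Matrix.neg_mul, Matrix.mul_neg]
  congr 1 <;> abel

theorem conjRealification_map_ofReal_add_I_smul (R S : Matrix m n ℝ) :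
    conjRealification (R.map Complex.ofReal + Complex.I • S.map Complex.ofReal) =
      fromBlocks R S S (-R) := by
  have re_eq : (R.map Complex.ofReal + Complex.I • S.map Complex.ofReal).map Complex.re = R := by
    ext i j
    simp
  have im_eq : (R.map Complex.ofReal + Complex.I • S.map Complex.ofReal).map Complex.im = S := by
    ext i j
    simp
  rw [conjRealification, re_eq, im_eq]

theorem conjRealification_map_ofReal (A : Matrix m n ℝ) :
    conjRealification (A.map Complex.ofReal) = fromBlocks A 0 0 (-A) := by
  simpa using conjRealification_map_ofReal_add_I_smul A 0

variable [Fintype n]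

theorem conjRealification_mul_map_ofReal_mul_transpose (U : Matrix m n ℂ) (A : Matrix n n ℝ) :
    conjRealification (U * A.map Complex.ofReal * Uᵀ) =
      conjRealification U * fromBlocks A 0 0 (-A) * (conjRealification U)ᵀ := by
  have star_map_ofReal : (A.map Complex.ofReal).map star = A.map Complex.ofReal := by
    ext i j
    simp
  rw [← conjRealification_map_ofReal, conjRealification_mul_conjRealification, star_map_ofReal,
    ← conjRealification_transpose, realification_mul_conjRealification]

variable [DecidableEq n]

theorem conjRealification_mem_orthogonalGroup {U : Matrix n n ℂ} (hU : U ∈ unitaryGroup n ℂ) :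
    conjRealification U ∈ orthogonalGroup (n ⊕ n) ℝ := by
  rw [mem_orthogonalGroup_iff, ← conjRealification_transpose,
    conjRealification_mul_conjRealification]
  change realification (U * star U) = 1
  rw [mem_unitaryGroup_iff.1 hU, realification_one]

end Realification

section Charpoly

variable {n α : Type*} [Fintype n] [DecidableEq n] [CommRing α]

theorem charpoly_mul_mul_of_mul_eq_one {P Q : Matrix n n α} (hQP : Q * P = 1)
    (A : Matrix n n α) : (P * A * Q).charpoly = A.charpoly := by
  rw [Matrix.mul_assoc, charpoly_mul_comm, Matrix.mul_assoc, hQP, Matrix.mul_one]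

theorem charpoly_fromBlocks_diagonal_neg_diagonal (d : n → α) :
    (fromBlocks (diagonal d) 0 0 (-diagonal d)).charpoly =
      ∏ i, ((X - C (d i)) * (X + C (d i))) := by
  rw [charpoly_fromBlocks_zero₁₂, diagonal_neg, charpoly_diagonal, charpoly_diagonal,
    ← Finset.prod_mul_distrib]
  simp only [C_neg, sub_neg_eq_add]

end Charpoly

/-- If `U = R + iS` is unitary, `Λ = diagonal λ`, `B = U Λ Uᵗ`, and
`K`, `T`, `Λ̃` are the associated `2m × 2m` block matrices, then `T` is orthogonal,
`K = T Λ̃ Tᵗ`, and the eigenvalues of `K` are exactly `λ₁, …, λ_m, −λ₁, …, −λ_m`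
(expressed via the characteristic polynomial of `K`). -/
theorem stmt0 (m : ℕ) (hm : 1 ≤ m)
    (R S : Matrix (Fin m) (Fin m) ℝ) (lam : Fin m → ℝ)
    (U : Matrix (Fin m) (Fin m) ℂ)
    (hU : U = R.map (Complex.ofReal) + Complex.I • S.map (Complex.ofReal))
    (hUunitary : U ∈ Matrix.unitaryGroup (Fin m) ℂ)
    (B : Matrix (Fin m) (Fin m) ℂ)
    (hB : B = U * Matrix.diagonal (fun i => (lam i : ℂ)) * Uᵀ)
    (K : Matrix (Fin m ⊕ Fin m) (Fin m ⊕ Fin m) ℝ)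
    (hK : K = Matrix.fromBlocks (B.map Complex.re) (B.map Complex.im)
      (B.map Complex.im) (-(B.map Complex.re)))
    (T : Matrix (Fin m ⊕ Fin m) (Fin m ⊕ Fin m) ℝ)
    (hT : T = Matrix.fromBlocks R S S (-R))
    (Lt : Matrix (Fin m ⊕ Fin m) (Fin m ⊕ Fin m) ℝ)
    (hLt : Lt = Matrix.fromBlocks (Matrix.diagonal lam) 0 0 (-(Matrix.diagonal lam))) :
    T * Tᵀ = 1 ∧ Tᵀ * T = 1 ∧ K = T * Lt * Tᵀ ∧
      K.charpoly = ∏ i : Fin m, ((X - C (lam i)) * (X + C (lam i))) := by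
  have K_eq : K = conjRealification B := hK
  have T_eq : T = conjRealification U := by
    rw [hT, hU, conjRealification_map_ofReal_add_I_smul]
  have T_orthogonal : T ∈ orthogonalGroup (Fin m ⊕ Fin m) ℝ :=
    T_eq ▸ conjRealification_mem_orthogonalGroup hUunitary
  have B_eq : B = U * (diagonal lam).map Complex.ofReal * Uᵀ := by
    rw [hB, diagonal_map Complex.ofReal_zero]
  have K_eq_conj : K = T * Lt * Tᵀ := by
    rw [K_eq, B_eq, T_eq, hLt, conjRealification_mul_map_ofReal_mul_transpose]
  have transpose_mul_T : Tᵀ * T = 1 := (mem_orthogonalGroup_iff' _ _).1 T_orthogonal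
  refine ⟨(mem_orthogonalGroup_iff _ _).1 T_orthogonal, transpose_mul_T, K_eq_conj, ?_⟩
  rw [K_eq_conj, charpoly_mul_mul_of_mul_eq_one transpose_mul_T, hLt,
    charpoly_fromBlocks_diagonal_neg_diagonal]
end

section
/- Let m ≥ 1 and let B_m = (b_{kℓ})_{1≤k,ℓ≤m} be a complex symmetric m×m matrix (b_{kℓ} = b_{ℓk}), with associated 2m×2m real symmetric matrix K_m. Then det(I_{2m} + K_m) = det(I_m − B_m* B_m), where B_m* is the conjugate transpose of B_m; in particular both determinants are real. -/
open Matrix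

/-!
`K` is the real matrix of the antilinear map `v ↦ B v̄`. In the coordinates
`(x + i y, x - i y)`, that is `(v, v̄)`, it becomes the antidiagonal block matrix with blocks `B`
and the entrywise conjugate `B̄`. Hence `det (1 + K)` is the determinant of the block matrix
`[1, B; B̄, 1]`, whose Schur complement is `1 - B̄ B`; for symmetric `B`, `B̄` is `Bᴴ`.
-/

section CommRing

variable {n R : Type*} [DecidableEq n] [CommRing R]

variable (n) in
/-- The change of coordinates `(x, y) ↦ (x + i y, x - i y)`, where `i` plays the role of an
imaginary unit. -/
def conjCoordinates (i : R) : Matrix (n ⊕ n) (n ⊕ n) R :=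
  fromBlocks 1 (i • 1) 1 (-(i • 1))

variable [Fintype n]

lemma det_conjCoordinates (i : R) :
    (conjCoordinates n i).det = (2 * -i) ^ Fintype.card n := by
  have schur_complement : (-(i • 1) - 1 * (i • 1) : Matrix n n R) = (2 * -i) • 1 := by
    rw [one_mul]
    module
  rw [conjCoordinates, det_fromBlocks_one₁₁, schur_complement, det_smul, det_one, mul_one]

lemma isRegular_det_conjCoordinates {i : R} (hi : i * i = -1) (h2 : IsRegular (2 : R)) :
    IsRegular (conjCoordinates n i).det := by
  have hunit : IsUnit (-i) := .of_mul_eq_one i (by rw [neg_mul, hi, neg_neg])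
  rw [det_conjCoordinates]
  exact (h2.mul hunit.isRegular).pow _

lemma conjCoordinates_mul_fromBlocks {i : R} (hi : i * i = -1) (X Y : Matrix n n R) :
    conjCoordinates n i * fromBlocks X Y Y (-X) =
      fromBlocks 0 (X + i • Y) (X - i • Y) 0 * conjCoordinates n i := by
  simp [conjCoordinates, fromBlocks_multiply, smul_smul, hi, add_comm, sub_eq_add_neg]

lemma det_one_add_fromBlocks_zero_diag (C D : Matrix n n R) :
    (1 + fromBlocks 0 C D 0).det = (1 - D * C).det := by
  rw [← fromBlocks_one, fromBlocks_add, add_zero, zero_add, zero_add,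
    det_fromBlocks_one₁₁]

theorem det_one_add_fromBlocks_neg {i : R} (hi : i * i = -1) (h2 : IsRegular (2 : R))
    (X Y : Matrix n n R) :
    (1 + fromBlocks X Y Y (-X)).det = (1 - (X - i • Y) * (X + i • Y)).det := by
  have intertwine : conjCoordinates n i * (1 + fromBlocks X Y Y (-X)) =
      (1 + fromBlocks 0 (X + i • Y) (X - i • Y) 0) * conjCoordinates n i := by
    rw [mul_add, add_mul, mul_one, one_mul, conjCoordinates_mul_fromBlocks hi]
  apply (isRegular_det_conjCoordinates (n := n) hi h2).left
  calc (conjCoordinates n i).det * (1 + fromBlocks X Y Y (-X)).det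
      = (1 + fromBlocks 0 (X + i • Y) (X - i • Y) 0).det * (conjCoordinates n i).det := by
        rw [← det_mul, intertwine, det_mul]
    _ = (conjCoordinates n i).det * (1 - (X - i • Y) * (X + i • Y)).det := by
        rw [det_one_add_fromBlocks_zero_diag, mul_comm]

end CommRing

section Complex

variable {n : Type*}

/-- The matrix of the antilinear map `v ↦ B v̄` in the real coordinates `(Re v, Im v)`. For
symmetric `B` this is the real symmetric matrix `K` associated with `B`. -/
def antilinearRealMatrix (B : Matrix n n ℂ) : Matrix (n ⊕ n) (n ⊕ n) ℝ :=
  fromBlocks (B.map Complex.re) (B.map Complex.im) (B.map Complex.im) (-B.map Complex.re)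

lemma map_ofReal_antilinearRealMatrix (B : Matrix n n ℂ) :
    (antilinearRealMatrix B).map Complex.ofRealHom =
      fromBlocks (B.map fun z ↦ (z.re : ℂ)) (B.map fun z ↦ (z.im : ℂ))
        (B.map fun z ↦ (z.im : ℂ)) (-B.map fun z ↦ (z.re : ℂ)) := by
  ext (k | k) (l | l) <;> simp [antilinearRealMatrix]

lemma map_re_add_I_smul_map_im (B : Matrix n n ℂ) :
    (B.map fun z ↦ (z.re : ℂ)) + Complex.I • (B.map fun z ↦ (z.im : ℂ)) = B := by
  ext k l
  simp [mul_comm Complex.I, Complex.re_add_im]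

lemma map_re_sub_I_smul_map_im (B : Matrix n n ℂ) :
    (B.map fun z ↦ (z.re : ℂ)) - Complex.I • (B.map fun z ↦ (z.im : ℂ)) = B.map star := by
  ext k l
  simp [Complex.ext_iff]

theorem stmt3_general [Fintype n] [DecidableEq n] (B : Matrix n n ℂ) :
    (((1 + antilinearRealMatrix B).det : ℝ) : ℂ) = (1 - B.map star * B).det := by
  have h2 : IsRegular (2 : ℂ) := .of_ne_zero two_ne_zero
  calc (((1 + antilinearRealMatrix B).det : ℝ) : ℂ)
      = (1 + (antilinearRealMatrix B).map Complex.ofRealHom).det := by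
        rw [← Complex.ofRealHom_eq_coe, RingHom.map_det, map_add, map_one,
          RingHom.mapMatrix_apply]
    _ = (1 - B.map star * B).det := by
        rw [map_ofReal_antilinearRealMatrix, det_one_add_fromBlocks_neg Complex.I_mul_I h2,
          map_re_add_I_smul_map_im, map_re_sub_I_smul_map_im]

end Complex

/-- For a complex symmetric matrix `B_m` with associated real symmetric
block matrix `K_m`, one has `det(I + K_m) = det(I − B_m* B_m)`; in particular both
determinants are real (the left-hand side is a real determinant coerced to `ℂ`). -/
theorem stmt3 (m : ℕ) (hm : 1 ≤ m) (b : Fin m → Fin m → ℂ)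
    (hsym : ∀ k l, b k l = b l k)
    (B : Matrix (Fin m) (Fin m) ℂ) (hB : B = Matrix.of b)
    (K : Matrix (Fin m ⊕ Fin m) (Fin m ⊕ Fin m) ℝ)
    (hK : K = Matrix.fromBlocks
      (Matrix.of fun k l => (b k l).re) (Matrix.of fun k l => (b k l).im)
      (Matrix.of fun k l => (b k l).im) (-(Matrix.of fun k l => (b k l).re))) :
    (((1 + K).det : ℝ) : ℂ) = (1 - Bᴴ * B).det := by
  rw [hB, hK]
  have hsymm : (of b)ᵀ = of b := Matrix.ext fun k l ↦ hsym l k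
  rw [conjTranspose, hsymm]
  exact stmt3_general (of b)
end
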